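/- arXiv:1801.00431 — 8 statements merged into one kernel-verified Lean document; each statement's English description precedes it below -/
import Mathlib

section
/- For every natural number i and real numbers c > 0 and d > 0, the integral ∫₀^c x^i e^{-d/x} dx equals c^{i+1} · Ei(i+2, d/c). -/
open MeasureTheory Real

/-- Generalized exponential integral `Ei(n, s) = ∫₁^∞ e^{-s t} t^{-n} dt`. -/
noncomputable def Ei (n : ℕ) (s : ℝ) : ℝ :=
  ∫ t in Set.Ioi (1 : ℝ), Real.exp (-s * t) / t ^ n

theorem stmt_0 (i : ℕ) (c d : ℝ) (hc : 0 < c) (hd : 0 < d) :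
    ∫ x in (0 : ℝ)..c, x ^ i * Real.exp (-d / x)
      = c ^ (i + 1) * Ei (i + 2) (d / c) := by
  have himg : (fun t : ℝ => c / t) '' Set.Ioi 1 = Set.Ioo 0 c := by
    ext x
    simp only [Set.mem_image, Set.mem_Ioi, Set.mem_Ioo]
    constructor
    · rintro ⟨t, ht, rfl⟩
      have h0 : 0 < t := by linarith
      exact ⟨by positivity, div_lt_self hc ht⟩
    · rintro ⟨h0, h1⟩
      refine ⟨c / x, (one_lt_div h0).2 h1, ?_⟩
      field_simp
  have hder : ∀ t ∈ Set.Ioi (1 : ℝ),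
      HasDerivWithinAt (fun t : ℝ => c / t) (-(c / t ^ 2)) (Set.Ioi 1) t := by
    intro t ht
    have h0 : t ≠ 0 := (lt_trans one_pos (Set.mem_Ioi.1 ht)).ne'
    have h := ((hasDerivAt_inv h0).const_mul c).hasDerivWithinAt (s := Set.Ioi 1)
    have e : -(c / t ^ 2) = c * -(t ^ 2)⁻¹ := by ring
    rw [e]
    simpa only [div_eq_mul_inv] using h
  have hinj : Set.InjOn (fun t : ℝ => c / t) (Set.Ioi 1) := by
    intro a ha b hb h
    have ha0 : a ≠ 0 := (lt_trans one_pos (Set.mem_Ioi.1 ha)).ne'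
    have hb0 : b ≠ 0 := (lt_trans one_pos (Set.mem_Ioi.1 hb)).ne'
    simp only at h
    rw [div_eq_div_iff ha0 hb0] at h
    exact (mul_left_cancel₀ hc.ne' h).symm
  rw [intervalIntegral.integral_of_le hc.le, integral_Ioc_eq_integral_Ioo, ← himg,
    integral_image_eq_integral_abs_deriv_smul measurableSet_Ioi hder hinj, Ei,
    ← integral_const_mul]
  refine setIntegral_congr_fun measurableSet_Ioi ?_
  intro t ht
  have h0 : 0 < t := lt_trans one_pos (Set.mem_Ioi.1 ht)
  have e : -d / (c / t) = -(d / c) * t := by field_simp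
  simp only [smul_eq_mul, abs_neg]
  rw [abs_of_pos (by positivity), e, div_pow]
  field_simp
  ring
end

section
/- For every natural number i and real number d > 0, the limit as x → 0⁺ of x^{i+1} · Ei(i+2, d/x) is 0. -/
open MeasureTheory Real Filter

theorem stmt_1 (i : ℕ) (d : ℝ) (hd : 0 < d) :
    Tendsto (fun x : ℝ => x ^ (i + 1) * Ei (i + 2) (d / x))
      (nhdsWithin 0 (Set.Ioi 0)) (nhds 0) := by
  have hint : IntegrableOn (fun t : ℝ => t ^ (-2 : ℝ)) (Set.Ioi 1) :=
    integrableOn_Ioi_rpow_of_lt (by norm_num) one_pos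
  have hb : ∀ x : ℝ, 0 < x →
      ‖Ei (i + 2) (d / x)‖ ≤ ∫ t in Set.Ioi (1 : ℝ), t ^ (-2 : ℝ) := by
    intro x hx
    unfold Ei
    refine norm_integral_le_of_norm_le hint ?_
    refine (ae_restrict_iff' measurableSet_Ioi).2 (Eventually.of_forall ?_)
    intro t ht
    have ht1 : (1 : ℝ) < t := ht
    have ht0 : (0 : ℝ) < t := by linarith
    have h1 : Real.exp (-(d / x) * t) ≤ 1 := by
      rw [Real.exp_le_one_iff]
      have : 0 < d / x * t := by positivity
      linarith
    have h2 : t ^ 2 ≤ t ^ (i + 2) := pow_le_pow_right₀ ht1.le (by omega)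
    rw [Real.norm_of_nonneg (by positivity), Real.rpow_neg ht0.le, Real.rpow_two, ← one_div]
    gcongr
  have h0 : Tendsto (fun x : ℝ => x ^ (i + 1)) (nhdsWithin 0 (Set.Ioi 0)) (nhds 0) := by
    have h : Continuous (fun x : ℝ => x ^ (i + 1)) := by fun_prop
    have := h.tendsto 0
    simp only [zero_pow (Nat.succ_ne_zero i)] at this
    exact this.mono_left nhdsWithin_le_nhds
  refine h0.zero_mul_isBoundedUnder_le ?_
  refine ⟨∫ t in Set.Ioi (1 : ℝ), t ^ (-2 : ℝ), ?_⟩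
  rw [eventually_map]
  filter_upwards [self_mem_nhdsWithin] with x hx
  exact hb x hx
end

section
/- For all real numbers c > 0 and d > 0, ∫₀^c e^{-x - d/x} dx = Σ_{i=0}^∞ ((-1)^i c^{i+1} / i!) · Ei(i+2, d/c), where the series on the right converges. -/
open MeasureTheory Real

theorem aux_int (s : ℝ) (hs : 0 < s) (n : ℕ) :
    IntegrableOn (fun t : ℝ => Real.exp (-s * t) / t ^ n) (Set.Ioi 1) ∧
    ∀ t ∈ Set.Ioi (1 : ℝ), Real.exp (-s * t) / t ^ n ≤ Real.exp (-s * t) := by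
  have hb : ∀ t ∈ Set.Ioi (1 : ℝ), Real.exp (-s * t) / t ^ n ≤ Real.exp (-s * t) := by
    intro t ht
    exact div_le_self (Real.exp_pos _).le (one_le_pow₀ (le_of_lt ht))
  refine ⟨?_, hb⟩
  refine Integrable.mono' (integrableOn_exp_mul_Ioi (a := -s) (by linarith) 1) ?_ ?_
  · exact (by fun_prop : Measurable (fun t : ℝ => Real.exp (-s * t) / t ^ n)).aestronglyMeasurable
  · filter_upwards [ae_restrict_mem measurableSet_Ioi] with t ht
    have h0 : (0 : ℝ) < t := lt_trans one_pos ht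
    rw [Real.norm_of_nonneg (by positivity)]
    exact hb t ht

theorem aux_sub (c d : ℝ) (hc : 0 < c) :
    ∫ x in (0 : ℝ)..c, Real.exp (-x - d / x) =
      ∫ t in Set.Ioi (1 : ℝ), c / t ^ 2 * Real.exp (-(c / t) - d / (c / t)) := by
  rw [intervalIntegral.integral_of_le hc.le, integral_Ioc_eq_integral_Ioo]
  have himg : (fun t : ℝ => c / t) '' Set.Ioi 1 = Set.Ioo 0 c := by
    ext x
    constructor
    · rintro ⟨t, ht, rfl⟩
      have ht' : (1 : ℝ) < t := ht
      exact ⟨by positivity, div_lt_self hc ht'⟩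
    · rintro ⟨h0, h1⟩
      exact ⟨c / x, (one_lt_div h0).2 h1, by field_simp⟩
  rw [← himg, integral_image_eq_integral_abs_deriv_smul (f' := fun t => -c / t ^ 2)
    measurableSet_Ioi]
  · refine setIntegral_congr_fun measurableSet_Ioi fun t ht => ?_
    have h0 : (0 : ℝ) < t := lt_trans one_pos ht
    simp only [smul_eq_mul]
    rw [neg_div, abs_neg, abs_of_pos (by positivity)]
  · intro t ht
    have h0 : t ≠ 0 := (lt_trans one_pos ht).ne'
    have := ((hasDerivAt_const t c).div (hasDerivAt_id t) h0)
    refine (HasDerivAt.congr_deriv this ?_).hasDerivWithinAt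
    simp
  · intro a ha b hb h
    have h0 : a ≠ 0 := (lt_trans one_pos ha).ne'
    have h1 : b ≠ 0 := (lt_trans one_pos hb).ne'
    simp only at h
    field_simp at h
    exact h.symm

theorem aux_hasSum (c d : ℝ) (hc : 0 < c) (hd : 0 < d) :
    HasSum (fun i : ℕ =>
      (-1 : ℝ) ^ i * c ^ (i + 1) / (Nat.factorial i) * Ei (i + 2) (d / c))
      (∫ x in (0 : ℝ)..c, Real.exp (-x - d / x)) := by
  have hs : 0 < d / c := div_pos hd hc
  set s := d / c with hsdef
  let F : ℕ → ℝ → ℝ := fun i t =>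
    (-1 : ℝ) ^ i * c ^ (i + 1) / (Nat.factorial i) * (Real.exp (-s * t) / t ^ (i + 2))
  have hF : ∀ i, Integrable (F i) (volume.restrict (Set.Ioi 1)) := fun i =>
    (aux_int s hs (i + 2)).1.const_mul _
  have hE : IntegrableOn (fun t : ℝ => Real.exp (-s * t)) (Set.Ioi 1) :=
    integrableOn_exp_mul_Ioi (a := -s) (by linarith) 1
  have hsum : Summable fun i => ∫ t in Set.Ioi (1 : ℝ), ‖F i t‖ := by
    refine Summable.of_nonneg_of_le (fun i => integral_nonneg fun t => norm_nonneg _)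
      (fun i => ?_) (((Real.summable_pow_div_factorial c).mul_left c).mul_right
        (∫ t in Set.Ioi (1 : ℝ), Real.exp (-s * t)))
    rw [← integral_const_mul]
    refine setIntegral_mono_on (hF i).norm (hE.const_mul _) measurableSet_Ioi fun t ht => ?_
    have h0 : (0 : ℝ) < t := lt_trans one_pos ht
    have hn : ‖F i t‖ = c * (c ^ i / (Nat.factorial i)) * (Real.exp (-s * t) / t ^ (i + 2)) := by
      simp only [F, norm_mul, norm_div, norm_pow, norm_neg, norm_one, one_pow, Real.norm_eq_abs,
        abs_of_pos hc, abs_of_pos h0, Real.abs_exp, Nat.abs_cast]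
      ring
    rw [hn]
    exact mul_le_mul_of_nonneg_left ((aux_int s hs (i + 2)).2 t ht) (by positivity)
  have key := hasSum_integral_of_summable_integral_norm hF hsum
  have h1 : ∀ i, ∫ t in Set.Ioi (1 : ℝ), F i t =
      (-1 : ℝ) ^ i * c ^ (i + 1) / (Nat.factorial i) * Ei (i + 2) s := fun i => by
    simp only [F, Ei, integral_const_mul]
  simp only [h1] at key
  suffices h : ∫ x in (0 : ℝ)..c, Real.exp (-x - d / x) =
      ∫ t in Set.Ioi (1 : ℝ), ∑' i : ℕ, F i t by
    rw [h]
    exact key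
  rw [aux_sub c d hc]
  refine setIntegral_congr_fun measurableSet_Ioi fun t ht => ?_
  have h0 : (0 : ℝ) < t := lt_trans one_pos ht
  have he : HasSum (fun i : ℕ => (-(c / t)) ^ i / (Nat.factorial i)) (Real.exp (-(c / t))) := by
    rw [Real.exp_eq_exp_ℝ]
    exact NormedSpace.expSeries_div_hasSum_exp (-(c / t))
  have h2 := (he.mul_left (c / t ^ 2 * Real.exp (-s * t))).tsum_eq
  have h3 : -(c / t) - d / (c / t) = -s * t + -(c / t) := by
    rw [hsdef]; field_simp; ring
  simp only [h3, Real.exp_add]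
  rw [← mul_assoc, ← h2]
  refine tsum_congr fun i => ?_
  simp only [F]
  rw [neg_pow, div_pow]
  field_simp
  ring

theorem stmt_2 (c d : ℝ) (hc : 0 < c) (hd : 0 < d) :
    Summable (fun i : ℕ =>
      (-1 : ℝ) ^ i * c ^ (i + 1) / (Nat.factorial i) * Ei (i + 2) (d / c)) ∧
    ∫ x in (0 : ℝ)..c, Real.exp (-x - d / x)
      = ∑' i : ℕ, (-1 : ℝ) ^ i * c ^ (i + 1) / (Nat.factorial i) * Ei (i + 2) (d / c) := by
  exact ⟨(aux_hasSum c d hc hd).summable, (aux_hasSum c d hc hd).tsum_eq.symm⟩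
end

section
/- For all real numbers λ > 0, φ > 0, θ, ψ, and 0 < ϱ < ϑ, the iterated integral ∫₀^λ ∫_{ϱ/(φx)}^{ϑ/(φx)} (1/2 - (ψ/√(2π))(φ x y - θ)) e^{-x - y} dy dx equals Σ_{i=0}^∞ ((-1)^i λ^{i+1} / i!) · [ (1/2 + ψ(θ-ϱ)/√(2π)) · Ei(i+2, ϱ/(λφ)) - (1/2 + ψ(θ-ϑ)/√(2π)) · Ei(i+2, ϑ/(λφ)) + (ψ φ λ/√(2π)) · ( Ei(i+3, ϑ/(λφ)) - Ei(i+3, ϱ/(λφ)) ) ], where the series converges. -/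
open MeasureTheory Real

lemma hs_congr {f g : ℕ → ℝ} {a : ℝ} (h : ∀ i, f i = g i) : HasSum f a ↔ HasSum g a := by
  rw [funext h]

lemma J_aux (l a : ℝ) (hl : 0 < l) (m : ℕ) :
    ∫ x in (0 : ℝ)..l, x ^ m * Real.exp (-(a / x)) = l ^ (m + 1) * Ei (m + 2) (a / l) := by
  rw [intervalIntegral.integral_of_le hl.le, integral_Ioc_eq_integral_Ioo]
  have himg : (fun t : ℝ => l / t) '' Set.Ioi 1 = Set.Ioo 0 l := by
    ext x
    constructor
    · rintro ⟨t, ht, rfl⟩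
      have ht1 : (1 : ℝ) < t := ht
      exact ⟨by positivity, div_lt_self hl ht1⟩
    · rintro ⟨h0, h1⟩
      refine ⟨l / x, ?_, ?_⟩
      · exact (one_lt_div h0).2 h1
      · have := h0.ne'
        have := hl.ne'
        simp only
        field_simp
  have hd : ∀ t ∈ Set.Ioi (1 : ℝ), HasDerivWithinAt (fun t : ℝ => l / t) (-l / t ^ 2)
      (Set.Ioi 1) t := by
    intro t ht
    have ht1 : (1 : ℝ) < t := ht
    have h := ((hasDerivAt_inv (x := t) (by positivity)).const_mul l).hasDerivWithinAt
      (s := Set.Ioi 1)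
    have e : (-l / t ^ 2) = l * -(t ^ 2)⁻¹ := by ring
    rw [e]
    simpa only [div_eq_mul_inv] using h
  have hinj : Set.InjOn (fun t : ℝ => l / t) (Set.Ioi 1) := by
    intro t ht u hu h
    have ht1 : (1 : ℝ) < t := ht
    have hu1 : (1 : ℝ) < u := hu
    have := hl.ne'
    have : t ≠ 0 := by positivity
    have : u ≠ 0 := by positivity
    simp only at h
    field_simp at h
    exact h.symm
  rw [← himg, integral_image_eq_integral_abs_deriv_smul measurableSet_Ioi hd hinj]
  unfold Ei
  rw [← integral_const_mul]
  refine setIntegral_congr_fun measurableSet_Ioi ?_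
  intro t ht
  have ht1 : (1 : ℝ) < t := ht
  have : 0 < t := by positivity
  have e1 : |-l / t ^ 2| = l / t ^ 2 := by
    rw [neg_div, abs_neg, abs_of_pos (by positivity)]
  have e2 : a / (l / t) = a / l * t := by field_simp
  simp only [e1, e2, smul_eq_mul, neg_mul, div_pow]
  field_simp
  try ring

lemma ii_aux (l a : ℝ) (hl : 0 < l) (ha : 0 < a) (k : ℕ) :
    IntervalIntegrable (fun x : ℝ => x ^ k * Real.exp (-x) * Real.exp (-(a / x))) volume 0 l := by
  have h1 : IntervalIntegrable (fun x : ℝ => x ^ k * Real.exp (-x)) volume 0 l := by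
    apply Continuous.intervalIntegrable
    fun_prop
  refine h1.mono_fun' ?_ ?_
  · apply Measurable.aestronglyMeasurable
    fun_prop
  · rw [Set.uIoc_of_le hl.le]
    filter_upwards [ae_restrict_mem measurableSet_Ioc] with x hx
    have hx0 := hx.1
    rw [Real.norm_of_nonneg (by positivity)]
    apply mul_le_of_le_one_right (by positivity)
    rw [Real.exp_le_one_iff]
    have : 0 < a / x := by positivity
    linarith

lemma K_aux (l a : ℝ) (hl : 0 < l) (ha : 0 < a) (k : ℕ) :
    HasSum (fun i : ℕ => (-1 : ℝ) ^ i / (Nat.factorial i) * (l ^ (i + k + 1) *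
      Ei (i + k + 2) (a / l)))
      (∫ x in (0 : ℝ)..l, x ^ k * Real.exp (-x) * Real.exp (-(a / x))) := by
  have hexp : ∀ x : ℝ, HasSum (fun i : ℕ => x ^ i / (Nat.factorial i)) (Real.exp x) := by
    intro x
    rw [Real.exp_eq_exp_ℝ]
    exact NormedSpace.expSeries_div_hasSum_exp x
  have key := intervalIntegral.hasSum_integral_of_dominated_convergence (μ := volume)
    (a := 0) (b := l)
    (F := fun (i : ℕ) (x : ℝ) => (-1 : ℝ) ^ i / (Nat.factorial i) *
      (x ^ (i + k) * Real.exp (-(a / x))))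
    (f := fun x : ℝ => x ^ k * Real.exp (-x) * Real.exp (-(a / x)))
    (fun i _ => l ^ k * (l ^ i / (Nat.factorial i))) ?_ ?_ ?_ ?_ ?_
  · refine (hs_congr ?_).mp key
    intro i
    simp only [intervalIntegral.integral_const_mul]
    rw [J_aux l a hl]
  · intro i
    apply Measurable.aestronglyMeasurable
    fun_prop
  · intro i
    refine Filter.Eventually.of_forall ?_
    intro x hx
    rw [Set.uIoc_of_le hl.le] at hx
    have hx0 := hx.1
    have h3 : Real.exp (-(a / x)) ≤ 1 := by
      rw [Real.exp_le_one_iff]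
      have : 0 < a / x := by positivity
      linarith
    have h4 : x ^ (i + k) ≤ l ^ (i + k) := by gcongr; exact hx.2
    rw [norm_mul, norm_div, norm_pow, norm_neg, norm_one, one_pow,
      Real.norm_of_nonneg (show 0 ≤ x ^ (i + k) * Real.exp (-(a / x)) by positivity),
      Real.norm_of_nonneg (by positivity)]
    calc _ ≤ 1 / (Nat.factorial i : ℝ) * (l ^ (i + k) * 1) := by gcongr
      _ = _ := by rw [pow_add]; ring
  · refine Filter.Eventually.of_forall ?_
    intro x hx
    exact ((hexp l).mul_left _).summable
  · exact intervalIntegrable_const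
  · refine Filter.Eventually.of_forall ?_
    intro x hx
    have h := ((hexp (-x)).mul_left (x ^ k)).mul_right (Real.exp (-(a / x)))
    refine (hs_congr ?_).mp h
    intro i
    rw [neg_pow, pow_add]
    ring

lemma inner_aux (A c φ x p q : ℝ) (hφ : 0 < φ) (hx : 0 < x) (θ : ℝ) :
    ∫ y in (p / (φ * x))..(q / (φ * x)),
          (A - c * (φ * x * y - θ)) * Real.exp (-x - y)
    = (A + c * (θ - p)) * (x ^ 0 * Real.exp (-x) * Real.exp (-(p / φ / x)))
      - (A + c * (θ - q)) * (x ^ 0 * Real.exp (-x) * Real.exp (-(q / φ / x)))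
      + c * φ * ((x ^ 1 * Real.exp (-x) * Real.exp (-(q / φ / x)))
        - (x ^ 1 * Real.exp (-x) * Real.exp (-(p / φ / x)))) := by
  have hd : ∀ y ∈ Set.uIcc (p / (φ * x)) (q / (φ * x)),
      HasDerivAt (fun y : ℝ => (c * φ * x - (A - c * (φ * x * y - θ))) * Real.exp (-x - y))
      ((A - c * (φ * x * y - θ)) * Real.exp (-x - y)) y := by
    intro y _
    have h1 : HasDerivAt (fun y : ℝ => Real.exp (-x - y)) (Real.exp (-x - y) * (-1)) y :=
      ((hasDerivAt_id y).const_sub (-x)).exp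
    have h2 : HasDerivAt (fun y : ℝ => c * φ * x - (A - c * (φ * x * y - θ)))
        (-(-(c * (φ * x * 1)))) y :=
      ((((((hasDerivAt_id y).const_mul (φ * x)).sub_const θ).const_mul c).const_sub A).const_sub _)
    refine (h2.mul h1).congr_deriv ?_
    ring
  rw [intervalIntegral.integral_eq_sub_of_hasDerivAt hd]
  · have hx' := hx.ne'
    have hφ' := hφ.ne'
    have e : ∀ r : ℝ, φ * x * (r / (φ * x)) = r := by intro r; field_simp
    have e2 : ∀ r : ℝ, Real.exp (-x - r / (φ * x)) = Real.exp (-x) * Real.exp (-(r / φ / x)) := by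
      intro r
      rw [← Real.exp_add, div_div]
      ring_nf
    simp only [e, e2]
    ring
  · apply Continuous.intervalIntegrable
    fun_prop

theorem stmt_7 (l φ θ ψ ϱ ϑ : ℝ) (hl : 0 < l) (hφ : 0 < φ) (hϱ : 0 < ϱ) (hϱϑ : ϱ < ϑ) :
    Summable (fun i : ℕ =>
      (-1 : ℝ) ^ i * l ^ (i + 1) / (Nat.factorial i) *
        ((1 / 2 + ψ * (θ - ϱ) / Real.sqrt (2 * π)) * Ei (i + 2) (ϱ / (l * φ))
          - (1 / 2 + ψ * (θ - ϑ) / Real.sqrt (2 * π)) * Ei (i + 2) (ϑ / (l * φ))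
          + ψ * φ * l / Real.sqrt (2 * π) *
              (Ei (i + 3) (ϑ / (l * φ)) - Ei (i + 3) (ϱ / (l * φ))))) ∧
    ∫ x in (0 : ℝ)..l,
        (∫ y in (ϱ / (φ * x))..(ϑ / (φ * x)),
          (1 / 2 - ψ / Real.sqrt (2 * π) * (φ * x * y - θ)) * Real.exp (-x - y))
      = ∑' i : ℕ, (-1 : ℝ) ^ i * l ^ (i + 1) / (Nat.factorial i) *
          ((1 / 2 + ψ * (θ - ϱ) / Real.sqrt (2 * π)) * Ei (i + 2) (ϱ / (l * φ))
            - (1 / 2 + ψ * (θ - ϑ) / Real.sqrt (2 * π)) * Ei (i + 2) (ϑ / (l * φ))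
            + ψ * φ * l / Real.sqrt (2 * π) *
                (Ei (i + 3) (ϑ / (l * φ)) - Ei (i + 3) (ϱ / (l * φ)))) := by
  have hϑ : 0 < ϑ := hϱ.trans hϱϑ
  set c := ψ / Real.sqrt (2 * π) with hc
  have hp : 0 < ϱ / φ := by positivity
  have hq : 0 < ϑ / φ := by positivity
  have H := (((K_aux l _ hl hp 0).mul_left (1 / 2 + c * (θ - ϱ))).sub
    ((K_aux l _ hl hq 0).mul_left (1 / 2 + c * (θ - ϑ)))).add
    (((K_aux l _ hl hq 1).sub (K_aux l _ hl hp 1)).mul_left (c * φ))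
  have hI := intervalIntegral.integral_congr_Ioo_of_le (μ := volume) hl.le
    (fun x (hx : x ∈ Set.Ioo 0 l) => inner_aux (1 / 2) c φ x ϱ ϑ hφ hx.1 θ)
  have i1 := ii_aux l _ hl hp 0
  have i2 := ii_aux l _ hl hq 0
  have i3 := ii_aux l _ hl hp 1
  have i4 := ii_aux l _ hl hq 1
  rw [intervalIntegral.integral_add ((i1.const_mul _).sub (i2.const_mul _))
      ((i4.sub i3).const_mul _),
    intervalIntegral.integral_sub (i1.const_mul _) (i2.const_mul _),
    intervalIntegral.integral_const_mul, intervalIntegral.integral_const_mul,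
    intervalIntegral.integral_const_mul, intervalIntegral.integral_sub i4 i3] at hI
  rw [← hI] at H
  have H2 := (hs_congr (g := fun i : ℕ =>
      (-1 : ℝ) ^ i * l ^ (i + 1) / (Nat.factorial i) *
        ((1 / 2 + ψ * (θ - ϱ) / Real.sqrt (2 * π)) * Ei (i + 2) (ϱ / (l * φ))
          - (1 / 2 + ψ * (θ - ϑ) / Real.sqrt (2 * π)) * Ei (i + 2) (ϑ / (l * φ))
          + ψ * φ * l / Real.sqrt (2 * π) *
              (Ei (i + 3) (ϑ / (l * φ)) - Ei (i + 3) (ϱ / (l * φ))))) (by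
    intro i
    have e : ∀ r : ℝ, r / φ / l = r / (l * φ) := by intro r; rw [div_div, mul_comm]
    simp only [e, hc, add_zero, show i + 1 + 2 = i + 3 from rfl]
    ring)).mp H
  exact ⟨H2.summable, H2.tsum_eq.symm⟩
end

section
/- Let θ, ψ, φ, λ be real numbers with ψ > 0, φ > 0, λ > 0, set ϱ = θ - (1/ψ)√(π/2) and ϑ = θ + (1/ψ)√(π/2), and assume ϱ > 0. Define Ω(γ) = 1 for γ ≤ ϱ, Ω(γ) = 1/2 - (ψ/√(2π))(γ - θ) for ϱ < γ < ϑ, and Ω(γ) = 0 for γ ≥ ϑ. Then the iterated integral ∫₀^∞ ∫₀^∞ Ω(φ · y · min(x, λ)) e^{-x - y} dy dx equals 1 - (1/2 - (ψ/√(2π))(θ - ϱ - λφ)) e^{-λ - ϱ/(λφ)} - (1/2 + (ψ/√(2π))(θ - ϑ - λφ)) e^{-λ - ϑ/(λφ)} + Σ_{i=0}^∞ ((-1)^i λ^{i+1} / i!) · [ (ψ λ φ/√(2π)) · ( Ei(i+3, ϑ/(λφ)) - Ei(i+3, ϱ/(λφ)) ) - (1/2 - ψ(θ-ϱ)/√(2π))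 · Ei(i+2, ϱ/(λφ)) - (1/2 + ψ(θ-ϑ)/√(2π)) · Ei(i+2, ϑ/(λφ)) ], where the series converges. (This is the exact, infinite-sum form of Theorem 1's finite-battery outage expression: the left-hand side is the average of the linearized error probability Ω over the SNR γ = φ y min(x, λ) when x and y are independent unit-mean exponential channel gains.) -/
open MeasureTheory Real

/-- Piecewise-linear approximation `Ω` of the finite-blocklength error probability,
with parameters `ψ, θ` and breakpoints `ϱ < ϑ`. -/
noncomputable def Omega (ψ θ ϱ ϑ γ : ℝ) : ℝ :=
  if γ ≤ ϱ then 1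
  else if γ < ϑ then 1 / 2 - ψ / Real.sqrt (2 * π) * (γ - θ)
  else 0


lemma aux_max (a b : ℝ) (ha : 0 < a) (hb : 0 < b) :
    IntegrableOn (fun y : ℝ => max (b - a * y) 0 * Real.exp (-y)) (Set.Ioi 0) ∧
    ∫ y in Set.Ioi (0 : ℝ), max (b - a * y) 0 * Real.exp (-y)
      = b - a + a * Real.exp (-(b / a)) := by
  have hba : 0 < b / a := div_pos hb ha
  have hcont : Continuous (fun y : ℝ => max (b - a * y) 0 * Real.exp (-y)) := by fun_prop
  have hdiff : ∀ y ∈ Set.Ioi (0 : ℝ) \ Set.Ioc 0 (b / a),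
      max (b - a * y) 0 * Real.exp (-y) = 0 := by
    intro y hy
    have h1 : b / a < y := by
      by_contra h
      exact hy.2 ⟨hy.1, not_lt.mp h⟩
    have h2 : b < y * a := (div_lt_iff₀ ha).mp h1
    rw [max_eq_right (by linarith), zero_mul]
  constructor
  · have h1 : IntegrableOn (fun y : ℝ => max (b - a * y) 0 * Real.exp (-y)) (Set.Ioc 0 (b / a)) :=
      hcont.integrableOn_Ioc
    exact h1.of_forall_sdiff_eq_zero measurableSet_Ioi hdiff
  · rw [setIntegral_eq_of_subset_of_forall_sdiff_eq_zero measurableSet_Ioi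
      (fun y hy => hy.1 : Set.Ioc 0 (b / a) ⊆ Set.Ioi 0) hdiff,
      ← intervalIntegral.integral_of_le hba.le]
    have h3 : ∫ y in (0 : ℝ)..(b / a), max (b - a * y) 0 * Real.exp (-y)
        = ∫ y in (0 : ℝ)..(b / a), (b - a * y) * Real.exp (-y) := by
      apply intervalIntegral.integral_congr
      intro y hy
      rw [Set.uIcc_of_le hba.le] at hy
      have h2 : y * a ≤ b := (le_div_iff₀ ha).mp hy.2
      simp only
      rw [max_eq_left (by linarith)]
    rw [h3, intervalIntegral.integral_eq_sub_of_hasDerivAt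
      (f := fun y => (a - b + a * y) * Real.exp (-y))]
    · field_simp
      simp
      ring
    · intro y _
      have h4 : HasDerivAt (fun y : ℝ => a - b + a * y) a y := by
        simpa using ((hasDerivAt_id y).const_mul a).const_add (a - b)
      have h5 : HasDerivAt (fun y : ℝ => Real.exp (-y)) (Real.exp (-y) * (-1)) y :=
        (hasDerivAt_neg y).exp
      have h6 : HasDerivAt (fun y : ℝ => (a - b + a * y) * Real.exp (-y)) _ y := h4.mul h5
      exact h6.congr_deriv (by ring)
    · exact Continuous.intervalIntegrable (by fun_prop) _ _

lemma aux_series (l s : ℝ) (hl : 0 < l) (hs : 0 < s) :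
    HasSum (fun i : ℕ => (-1 : ℝ) ^ i * l ^ i / (Nat.factorial i) * Ei (i + 3) s)
      (∫ t in Set.Ioi (1 : ℝ), Real.exp (-(l / t)) * (Real.exp (-s * t) / t ^ 3)) := by
  have key := hasSum_integral_of_dominated_convergence
    (μ := volume.restrict (Set.Ioi (1 : ℝ)))
    (F := fun (i : ℕ) (t : ℝ) => (-1 : ℝ) ^ i * l ^ i / (Nat.factorial i) *
      (Real.exp (-s * t) / t ^ (i + 3)))
    (f := fun t => Real.exp (-(l / t)) * (Real.exp (-s * t) / t ^ 3))
    (fun (i : ℕ) (t : ℝ) => l ^ i / (Nat.factorial i) * Real.exp (-s * t))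
    ?_ ?_ ?_ ?_ ?_
  · simpa only [integral_const_mul, Ei] using key
  · intro i
    apply Measurable.aestronglyMeasurable
    fun_prop
  · intro i
    filter_upwards [ae_restrict_mem measurableSet_Ioi] with t ht
    have ht : (1 : ℝ) < t := ht
    rw [norm_mul, norm_div, norm_div, norm_mul, norm_pow, norm_pow, norm_pow]
    simp only [norm_neg, norm_one, one_pow, one_mul, Real.norm_eq_abs, Real.abs_exp,
      abs_of_pos hl, Nat.abs_cast, abs_of_pos (by linarith : 0 < t)]
    gcongr
    exact div_le_self (Real.exp_pos _).le (one_le_pow₀ ht.le)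
  · filter_upwards with t
    exact (Real.summable_pow_div_factorial l).mul_right _
  · simp only [tsum_mul_right]
    apply Integrable.const_mul
    exact integrableOn_exp_mul_Ioi (by linarith) 1
  · filter_upwards [ae_restrict_mem measurableSet_Ioi] with t ht
    have ht : (1 : ℝ) < t := ht
    have h0 : t ≠ 0 := by linarith
    have h := (NormedSpace.expSeries_div_hasSum_exp (𝔸 := ℝ) (-(l / t)))
    rw [← Real.exp_eq_exp_ℝ] at h
    have e : (fun i : ℕ => (-1 : ℝ) ^ i * l ^ i / (Nat.factorial i) *
        (Real.exp (-s * t) / t ^ (i + 3)))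
        = fun i : ℕ => (-(l / t)) ^ i / (Nat.factorial i) * (Real.exp (-s * t) / t ^ 3) := by
      funext i
      rw [neg_pow (l / t), div_pow, pow_add]
      field_simp
    rw [e]
    exact h.mul_right (Real.exp (-s * t) / t ^ 3)

lemma aux_subst (l φ b : ℝ) (hl : 0 < l) (hφ : 0 < φ) :
    ∫ x in Set.Ioc 0 l, x * Real.exp (-(b / (φ * x))) * Real.exp (-x)
      = l ^ 2 * ∫ t in Set.Ioi (1 : ℝ),
        Real.exp (-(l / t)) * (Real.exp (-(b / (l * φ)) * t) / t ^ 3) := by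
  have himg : (fun t : ℝ => l / t) '' Set.Ioi 1 = Set.Ioo 0 l := by
    ext x
    constructor
    · rintro ⟨t, ht, rfl⟩
      have ht : (1 : ℝ) < t := ht
      exact ⟨by positivity, div_lt_self hl ht⟩
    · rintro ⟨h1, h2⟩
      refine ⟨l / x, (one_lt_div h1).mpr h2, ?_⟩
      exact div_div_cancel₀ hl.ne'
  have hcv := integral_image_eq_integral_abs_deriv_smul (s := Set.Ioi (1 : ℝ))
    (f := fun t : ℝ => l / t) (f' := fun t => -l / t ^ 2) measurableSet_Ioi
    (by
      intro t ht
      have ht : (1 : ℝ) < t := ht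
      have h0 : t ≠ 0 := by linarith
      have h6 : HasDerivAt (fun t : ℝ => l / t) (l * -(t ^ 2)⁻¹) t :=
        (hasDerivAt_inv h0).const_mul l
      exact (h6.congr_deriv (by ring)).hasDerivWithinAt)
    (by
      intro t ht u hu h
      have ht : (1 : ℝ) < t := ht
      have hu : (1 : ℝ) < u := hu
      have h0 : t ≠ 0 := by linarith
      have h1 : u ≠ 0 := by linarith
      simp only at h
      field_simp at h
      exact h.symm)
    (fun x => x * Real.exp (-(b / (φ * x))) * Real.exp (-x))
  rw [integral_Ioc_eq_integral_Ioo, ← himg, hcv, ← integral_const_mul]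
  apply setIntegral_congr_fun measurableSet_Ioi
  intro t ht
  have ht : (1 : ℝ) < t := ht
  have h0 : t ≠ 0 := by linarith
  have e1 : |-l / t ^ 2| = l / t ^ 2 := by
    rw [neg_div, abs_neg, abs_of_pos (by positivity)]
  have e2 : -(b / (φ * (l / t))) = -(b / (l * φ)) * t := by field_simp
  simp only [smul_eq_mul]
  rw [e1, e2]
  field_simp

lemma aux_outer (l φ b : ℝ) (hl : 0 < l) (hφ : 0 < φ) (hb : 0 < b) :
    IntegrableOn (fun x => min x l * Real.exp (-(b / (φ * min x l))) * Real.exp (-x))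
      (Set.Ioi 0) ∧
    ∫ x in Set.Ioi (0 : ℝ), min x l * Real.exp (-(b / (φ * min x l))) * Real.exp (-x)
      = (l ^ 2 * ∫ t in Set.Ioi (1 : ℝ),
        Real.exp (-(l / t)) * (Real.exp (-(b / (l * φ)) * t) / t ^ 3))
        + l * Real.exp (-l - b / (l * φ)) := by
  have hint : IntegrableOn (fun x => min x l * Real.exp (-(b / (φ * min x l))) * Real.exp (-x))
      (Set.Ioi 0) := by
    have h1 : IntegrableOn (fun x : ℝ => l * Real.exp (-x)) (Set.Ioi 0) :=
      (integrableOn_exp_neg_Ioi 0).const_mul l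
    refine Integrable.mono' h1 ?_ ?_
    · apply Measurable.aestronglyMeasurable
      fun_prop
    · filter_upwards [ae_restrict_mem measurableSet_Ioi] with x hx
      have hx : (0 : ℝ) < x := hx
      have hm : 0 < min x l := lt_min hx hl
      rw [Real.norm_eq_abs, abs_of_pos (by positivity)]
      gcongr
      have : Real.exp (-(b / (φ * min x l))) ≤ 1 := by
        rw [Real.exp_le_one_iff]
        have : 0 < b / (φ * min x l) := by positivity
        linarith
      calc _ ≤ min x l * 1 := by gcongr
        _ ≤ l := by rw [mul_one]; exact min_le_right _ _
  refine ⟨hint, ?_⟩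
  rw [← Set.Ioc_union_Ioi_eq_Ioi hl.le, setIntegral_union (Set.Ioc_disjoint_Ioi le_rfl)
    measurableSet_Ioi (hint.mono_set Set.Ioc_subset_Ioi_self)
    (hint.mono_set (Set.Ioi_subset_Ioi hl.le)), ← aux_subst l φ b hl hφ]
  congr 1
  · apply setIntegral_congr_fun measurableSet_Ioc
    intro x hx
    simp only [min_eq_left hx.2]
  · rw [setIntegral_congr_fun (g := fun x => l * Real.exp (-(b / (φ * l))) * Real.exp (-x))
      measurableSet_Ioi (by
        intro x hx
        have hx : l < x := hx
        simp only [min_eq_right hx.le]), integral_const_mul, integral_exp_neg_Ioi, mul_assoc,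
        ← Real.exp_add]
    ring_nf

lemma aux_omega (ψ θ ϱ ϑ γ c : ℝ) (hc : c = ψ / Real.sqrt (2 * π)) (h1 : c * (θ - ϱ) = 1 / 2)
    (h2 : c * (ϑ - θ) = 1 / 2) (hlt : ϱ < ϑ) :
    Omega ψ θ ϱ ϑ γ = c * (max (ϑ - γ) 0 - max (ϱ - γ) 0) := by
  unfold Omega
  rw [← hc]
  split_ifs with h h'
  · rw [max_eq_left (by linarith), max_eq_left (by linarith)]
    linarith
  · rw [max_eq_left (by linarith), max_eq_right (by linarith)]
    linarith
  · rw [max_eq_right (by linarith), max_eq_right (by linarith)]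
    simp

theorem stmt_8 (θ ψ φ l ϱ ϑ : ℝ) (hψ : 0 < ψ) (hφ : 0 < φ) (hl : 0 < l)
    (hϱ : ϱ = θ - (1 / ψ) * Real.sqrt (π / 2))
    (hϑ : ϑ = θ + (1 / ψ) * Real.sqrt (π / 2))
    (hϱpos : 0 < ϱ) :
    Summable (fun i : ℕ =>
      (-1 : ℝ) ^ i * l ^ (i + 1) / (Nat.factorial i) *
        (ψ * l * φ / Real.sqrt (2 * π) *
            (Ei (i + 3) (ϑ / (l * φ)) - Ei (i + 3) (ϱ / (l * φ)))
          - (1 / 2 - ψ * (θ - ϱ) / Real.sqrt (2 * π)) * Ei (i + 2) (ϱ / (l * φ))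
          - (1 / 2 + ψ * (θ - ϑ) / Real.sqrt (2 * π)) * Ei (i + 2) (ϑ / (l * φ)))) ∧
    ∫ x in Set.Ioi (0 : ℝ),
        (∫ y in Set.Ioi (0 : ℝ), Omega ψ θ ϱ ϑ (φ * y * min x l) * Real.exp (-x - y))
      = 1
        - (1 / 2 - ψ / Real.sqrt (2 * π) * (θ - ϱ - l * φ)) * Real.exp (-l - ϱ / (l * φ))
        - (1 / 2 + ψ / Real.sqrt (2 * π) * (θ - ϑ - l * φ)) * Real.exp (-l - ϑ / (l * φ))
        + ∑' i : ℕ, (-1 : ℝ) ^ i * l ^ (i + 1) / (Nat.factorial i) *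
            (ψ * l * φ / Real.sqrt (2 * π) *
                (Ei (i + 3) (ϑ / (l * φ)) - Ei (i + 3) (ϱ / (l * φ)))
              - (1 / 2 - ψ * (θ - ϱ) / Real.sqrt (2 * π)) * Ei (i + 2) (ϱ / (l * φ))
              - (1 / 2 + ψ * (θ - ϑ) / Real.sqrt (2 * π)) * Ei (i + 2) (ϑ / (l * φ))) := by
  obtain ⟨c, hc⟩ : ∃ c, c = ψ / Real.sqrt (2 * π) := ⟨_, rfl⟩
  have hq : 0 < Real.sqrt (π / 2) := Real.sqrt_pos.mpr (by positivity)
  have hs2 : Real.sqrt (2 * π) = 2 * Real.sqrt (π / 2) := by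
    rw [show 2 * π = 2 ^ 2 * (π / 2) by ring, Real.sqrt_mul (by positivity),
      Real.sqrt_sq (by norm_num)]
  have hcd : c * ((1 / ψ) * Real.sqrt (π / 2)) = 1 / 2 := by
    rw [hc, hs2]
    field_simp
  have hd : 0 < (1 / ψ) * Real.sqrt (π / 2) := by positivity
  have h1 : c * (θ - ϱ) = 1 / 2 := by rw [← hcd, hϱ]; ring
  have h2 : c * (ϑ - θ) = 1 / 2 := by rw [← hcd, hϑ]; ring
  have hlt : ϱ < ϑ := by linarith
  have hϑpos : 0 < ϑ := by linarith
  have hinner : ∀ x ∈ Set.Ioi (0 : ℝ),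
      (∫ y in Set.Ioi (0 : ℝ), Omega ψ θ ϱ ϑ (φ * y * min x l) * Real.exp (-x - y))
      = Real.exp (-x) + (c * φ * (min x l * Real.exp (-(ϑ / (φ * min x l))) * Real.exp (-x))
        - c * φ * (min x l * Real.exp (-(ϱ / (φ * min x l))) * Real.exp (-x))) := by
    intro x hx
    have hm : 0 < min x l := lt_min hx hl
    have ha : 0 < φ * min x l := by positivity
    obtain ⟨i1, e1⟩ := aux_max (φ * min x l) ϑ ha hϑpos
    obtain ⟨i2, e2⟩ := aux_max (φ * min x l) ϱ ha hϱpos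
    have : ∀ y : ℝ, Omega ψ θ ϱ ϑ (φ * y * min x l) * Real.exp (-x - y)
        = c * Real.exp (-x) * (max (ϑ - φ * min x l * y) 0 * Real.exp (-y)
          - max (ϱ - φ * min x l * y) 0 * Real.exp (-y)) := by
      intro y
      rw [aux_omega ψ θ ϱ ϑ _ c hc h1 h2 hlt, sub_eq_add_neg (-x) y, Real.exp_add,
        mul_right_comm φ y]
      ring
    simp only [this]
    rw [integral_const_mul, integral_sub i1 i2, e1, e2]
    linear_combination Real.exp (-x) * h1 + Real.exp (-x) * h2
  rw [setIntegral_congr_fun measurableSet_Ioi hinner]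
  obtain ⟨i1, e1⟩ := aux_outer l φ ϑ hl hφ hϑpos
  obtain ⟨i2, e2⟩ := aux_outer l φ ϱ hl hφ hϱpos
  have s1 := aux_series l (ϑ / (l * φ)) hl (by positivity)
  have s2 := aux_series l (ϱ / (l * φ)) hl (by positivity)
  have hsum := (s1.sub s2).mul_left (c * φ * l ^ 2)
  have hfun : (fun i : ℕ =>
      (-1 : ℝ) ^ i * l ^ (i + 1) / (Nat.factorial i) *
        (ψ * l * φ / Real.sqrt (2 * π) *
            (Ei (i + 3) (ϑ / (l * φ)) - Ei (i + 3) (ϱ / (l * φ)))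
          - (1 / 2 - ψ * (θ - ϱ) / Real.sqrt (2 * π)) * Ei (i + 2) (ϱ / (l * φ))
          - (1 / 2 + ψ * (θ - ϑ) / Real.sqrt (2 * π)) * Ei (i + 2) (ϑ / (l * φ))))
      = fun i : ℕ => c * φ * l ^ 2 *
        ((-1 : ℝ) ^ i * l ^ i / (Nat.factorial i) * Ei (i + 3) (ϑ / (l * φ))
        - (-1 : ℝ) ^ i * l ^ i / (Nat.factorial i) * Ei (i + 3) (ϱ / (l * φ))) := by
    funext i
    have z1 : 1 / 2 - ψ * (θ - ϱ) / Real.sqrt (2 * π) = 0 := by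
      rw [mul_div_right_comm, ← hc, h1, sub_self]
    have z2 : 1 / 2 + ψ * (θ - ϑ) / Real.sqrt (2 * π) = 0 := by
      rw [mul_div_right_comm, ← hc]; linarith
    have z3 : ψ * l * φ / Real.sqrt (2 * π) = c * l * φ := by rw [hc]; ring
    rw [z1, z2, z3]
    ring
  rw [hfun]
  refine ⟨hsum.summable, ?_⟩
  have i3 : IntegrableOn (fun x => c * φ * (min x l * Real.exp (-(ϑ / (φ * min x l))) * Real.exp (-x))
        - c * φ * (min x l * Real.exp (-(ϱ / (φ * min x l))) * Real.exp (-x))) (Set.Ioi 0) :=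
    (i1.const_mul _).sub (i2.const_mul _)
  rw [hsum.tsum_eq, ← hc, integral_add (integrableOn_exp_neg_Ioi 0) i3, integral_sub (i1.const_mul _) (i2.const_mul _),
    integral_const_mul, integral_const_mul, e1, e2, integral_exp_neg_Ioi, neg_zero, Real.exp_zero]
  linear_combination (-Real.exp (-l - ϱ / (l * φ))) * h1 + (-Real.exp (-l - ϑ / (l * φ))) * h2
end

section
/- The limit as z → 0⁺ of z · ∫₀^∞ t^{-2} e^{-t - z/t} dt equals 1. (Equivalently, lim_{z→0⁺} 2√z K₁(2√z) = 1.) -/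
open MeasureTheory Real Filter

lemma aux_subst_s14 (z : ℝ) (hz : 0 < z) :
    z * ∫ t in Set.Ioi (0 : ℝ), t ^ (-2 : ℤ) * Real.exp (-t - z / t)
      = ∫ u in Set.Ioi (0 : ℝ), Real.exp (-(z / u) - u) := by
  have him : (fun t : ℝ => z / t) '' Set.Ioi 0 = Set.Ioi 0 := by
    ext y
    constructor
    · rintro ⟨t, ht, rfl⟩
      exact div_pos hz ht
    · intro hy
      have hy' : 0 < y := hy
      exact ⟨z / y, div_pos hz hy, by field_simp⟩
  have key := integral_image_eq_integral_abs_deriv_smul (s := Set.Ioi (0 : ℝ))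
    (f := fun t : ℝ => z / t) (f' := fun t : ℝ => -z / t ^ 2) measurableSet_Ioi
    (fun t ht => by
      have ht' : t ≠ 0 := ne_of_gt ht
      have h := (hasDerivAt_inv ht').const_mul z
      have e : z * -(t ^ 2)⁻¹ = -z / t ^ 2 := by ring
      rw [e] at h
      exact h.hasDerivWithinAt)
    (fun a ha b hb hab => by
      have ha' : a ≠ 0 := ne_of_gt ha
      have hb' : b ≠ 0 := ne_of_gt hb
      have hz' : z ≠ 0 := hz.ne'
      simp only at hab
      rw [div_eq_div_iff ha' hb'] at hab
      exact (mul_left_cancel₀ hz' hab).symm)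
    (fun u : ℝ => Real.exp (-(z / u) - u))
  rw [him] at key
  rw [key, ← integral_const_mul]
  refine setIntegral_congr_fun measurableSet_Ioi (fun t ht => ?_)
  have ht' : (0 : ℝ) < t := ht
  have h1 : |-z / t ^ 2| = z * t ^ (-2 : ℤ) := by
    rw [neg_div, abs_neg, abs_of_pos (by positivity), div_eq_mul_inv, zpow_neg]
    norm_cast
  have h2 : z / (z / t) = t := by field_simp
  simp only [smul_eq_mul, h1, h2]
  ring

theorem stmt_14 :
    Tendsto (fun z : ℝ => z * ∫ t in Set.Ioi (0 : ℝ), t ^ (-2 : ℤ) * Real.exp (-t - z / t))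
      (nhdsWithin 0 (Set.Ioi 0)) (nhds 1) := by
  have hlim : Tendsto (fun z : ℝ => ∫ u in Set.Ioi (0 : ℝ), Real.exp (-(z / u) - u))
      (nhdsWithin 0 (Set.Ioi 0)) (nhds (∫ u in Set.Ioi (0 : ℝ), Real.exp (-u))) := by
    refine tendsto_integral_filter_of_dominated_convergence (fun u => Real.exp (-u)) ?_ ?_ ?_ ?_
    · refine Eventually.of_forall (fun z => ?_)
      exact Measurable.aestronglyMeasurable (by fun_prop)
    · filter_upwards [self_mem_nhdsWithin] with z hz
      filter_upwards [ae_restrict_mem measurableSet_Ioi] with u hu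
      have : 0 < z / u := div_pos hz hu
      rw [Real.norm_eq_abs, abs_of_pos (Real.exp_pos _)]
      exact Real.exp_le_exp.2 (by linarith)
    · exact integrableOn_exp_neg_Ioi 0
    · refine Eventually.of_forall (fun u => ?_)
      have hc : Continuous (fun z : ℝ => Real.exp (-(z / u) - u)) := by fun_prop
      have := hc.tendsto 0
      simp only [zero_div, neg_zero, zero_sub] at this
      exact this.mono_left nhdsWithin_le_nhds
  rw [integral_exp_neg_Ioi_zero] at hlim
  refine hlim.congr' ?_
  filter_upwards [self_mem_nhdsWithin] with z hz
  exact (aux_subst_s14 z hz).symm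
end

section
/- Let θ, ψ, φ be real numbers with ψ > 0 and φ > 0, set ϱ = θ - (1/ψ)√(π/2) and ϑ = θ + (1/ψ)√(π/2), and assume ϱ > 0. Define Ω(γ) = 1 for γ ≤ ϱ, Ω(γ) = 1/2 - (ψ/√(2π))(γ - θ) for ϱ < γ < ϑ, and Ω(γ) = 0 for γ ≥ ϑ, and define A(x) = ∫₀^∞ t^{-1} e^{-t - x/t} dt and B(x) = x ∫₀^∞ t^{-2} e^{-t - x/t} dt for x > 0. Then ∫₀^∞ Ω(φz) A(z) dz = 1 - (1/2)(1 + (2ψ/√(2π))(ϱ + φ - θ)) B(ϱ/φ) - (ψϱ/√(2π)) A(ϱ/φ) - (1/2)(1 - (2ψ/√(2π))(ϑ + φ - θ)) B(ϑ/φ) + (ψϑ/√(2π)) A(ϑ/φ). (This is the exact form of Theorem 1's infinite-battery outage expression: the left-hand side is the average of the linearized error probability Ω over the SNR γ = φ z, where z is the product of two independent unit-mean exponential channel gains, whose density is A(z) = 2K₀(2√z); in Bessel notation the right-hand side is 1 - √(ϱ/φ)[1 + (2ψ/√(2π))(ϱ+φ-θ)]K₁(2√(ϱ/φ)) - (2ψϱ/√(2π))K₀(2√(ϱ/φ))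 - √(ϑ/φ)[1 - (2ψ/√(2π))(ϑ+φ-θ)]K₁(2√(ϑ/φ)) + (2ψϑ/√(2π))K₀(2√(ϑ/φ)).) -/
open MeasureTheory Real

/-- `A x = ∫₀^∞ t⁻¹ e^{-t - x/t} dt` (the integral representation of `2K₀(2√x)`). -/
noncomputable def A (x : ℝ) : ℝ :=
  ∫ t in Set.Ioi (0 : ℝ), t⁻¹ * Real.exp (-t - x / t)

/-- `B x = x ∫₀^∞ t⁻² e^{-t - x/t} dt` (the integral representation of `2√x K₁(2√x)`). -/
noncomputable def B (x : ℝ) : ℝ :=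
  x * ∫ t in Set.Ioi (0 : ℝ), t ^ (-2 : ℤ) * Real.exp (-t - x / t)

open Set Filter Topology

lemma int_t : IntegrableOn (fun t : ℝ => t * exp (-t)) (Ioi 0) := by
  have := Real.GammaIntegral_convergent (s := 2) (by norm_num)
  refine this.congr_fun (fun t ht => ?_) measurableSet_Ioi
  norm_num [mul_comm]

lemma int_1 : IntegrableOn (fun t : ℝ => exp (-t)) (Ioi 0) := by
  have := Real.GammaIntegral_convergent (s := 1) (by norm_num)
  refine this.congr_fun (fun t ht => ?_) measurableSet_Ioi
  norm_num

lemma integral_t : ∫ t in Ioi (0 : ℝ), t * exp (-t) = 1 := by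
  have := Real.Gamma_eq_integral (s := 2) (by norm_num)
  rw [Real.Gamma_two] at this
  rw [this]
  refine setIntegral_congr_fun measurableSet_Ioi (fun t ht => ?_)
  norm_num [mul_comm]

lemma bound1 {a t : ℝ} (ha : 0 < a) (ht : 0 < t) : t⁻¹ * exp (-t - a / t) ≤ a⁻¹ * exp (-t) := by
  have h1 := Real.quadratic_le_exp_of_nonneg (x := a / t) (by positivity)
  have h2 : a / t ≤ exp (a / t) := by nlinarith [sq_nonneg (a / t)]
  rw [sub_eq_add_neg, Real.exp_add, Real.exp_neg (a / t)]
  have h3 : t⁻¹ * (exp (a / t))⁻¹ ≤ a⁻¹ := by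
    rw [← mul_inv]
    apply inv_anti₀ ha
    calc a = t * (a / t) := by field_simp
      _ ≤ _ := by gcongr
  calc _ = (t⁻¹ * (exp (a / t))⁻¹) * exp (-t) := by ring
    _ ≤ _ := by gcongr

lemma bound2 {a t : ℝ} (ha : 0 < a) (ht : 0 < t) :
    t ^ (-2 : ℤ) * exp (-t - a / t) ≤ 2 * (a ^ 2)⁻¹ * exp (-t) := by
  have h1 := Real.quadratic_le_exp_of_nonneg (x := a / t) (by positivity)
  have h2 : (a / t) ^ 2 / 2 ≤ exp (a / t) := by
    have : 0 < a / t := by positivity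
    linarith
  rw [sub_eq_add_neg, Real.exp_add, Real.exp_neg (a / t)]
  have h3 : t ^ (-2 : ℤ) * (exp (a / t))⁻¹ ≤ (a ^ 2 / 2)⁻¹ := by
    rw [zpow_neg, ← mul_inv]
    apply inv_anti₀ (by positivity)
    calc a ^ 2 / 2 = t ^ (2 : ℤ) * ((a / t) ^ 2 / 2) := by field_simp
      _ ≤ _ := by gcongr
  calc _ = (t ^ (-2 : ℤ) * (exp (a / t))⁻¹) * exp (-t) := by ring
    _ ≤ (a ^ 2 / 2)⁻¹ * exp (-t) := by gcongr
    _ = _ := by rw [inv_div]; ring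

lemma bound0 {a t : ℝ} (ha : 0 < a) (ht : 0 < t) : exp (-t - a / t) ≤ exp (-t) := by
  apply Real.exp_le_exp.2
  have : 0 < a / t := by positivity
  linarith

lemma intA {a : ℝ} (ha : 0 < a) :
    IntegrableOn (fun t : ℝ => t⁻¹ * exp (-t - a / t)) (Ioi 0) := by
  refine (int_1.const_mul a⁻¹).mono' (by fun_prop) ?_
  refine (ae_restrict_iff' measurableSet_Ioi).2 (Eventually.of_forall fun t ht => ?_)
  have ht : 0 < t := ht
  rw [Real.norm_of_nonneg (by positivity)]
  exact bound1 ha ht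

lemma intB {a : ℝ} (ha : 0 < a) :
    IntegrableOn (fun t : ℝ => t ^ (-2 : ℤ) * exp (-t - a / t)) (Ioi 0) := by
  refine (int_1.const_mul (2 * (a ^ 2)⁻¹)).mono' (by fun_prop) ?_
  refine (ae_restrict_iff' measurableSet_Ioi).2 (Eventually.of_forall fun t ht => ?_)
  have ht : 0 < t := ht
  rw [Real.norm_of_nonneg (by positivity)]
  exact bound2 ha ht

lemma intS {a : ℝ} (ha : 0 < a) :
    IntegrableOn (fun t : ℝ => exp (-t - a / t)) (Ioi 0) := by
  refine int_1.mono' (by fun_prop) ?_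
  refine (ae_restrict_iff' measurableSet_Ioi).2 (Eventually.of_forall fun t ht => ?_)
  have ht : 0 < t := ht
  rw [Real.norm_of_nonneg (by positivity)]
  exact bound0 ha ht

lemma intT {a : ℝ} (ha : 0 < a) :
    IntegrableOn (fun t : ℝ => t * exp (-t - a / t)) (Ioi 0) := by
  refine int_t.mono' (by fun_prop) ?_
  refine (ae_restrict_iff' measurableSet_Ioi).2 (Eventually.of_forall fun t ht => ?_)
  have ht : 0 < t := ht
  rw [Real.norm_of_nonneg (by positivity)]
  exact mul_le_mul_of_nonneg_left (bound0 ha ht) ht.le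

lemma hasD {a t : ℝ} (ht : 0 < t) :
    HasDerivAt (fun t : ℝ => exp (-t - a / t)) ((-1 + a * t ^ (-2 : ℤ)) * exp (-t - a / t)) t := by
  have h1 : HasDerivAt (fun t : ℝ => -t - a / t) (-1 - a * (-(t ^ 2)⁻¹)) t := by
    exact (hasDerivAt_neg t).sub ((hasDerivAt_inv ht.ne').const_mul a)
  have := h1.exp
  convert this using 1
  have : t ^ (-2 : ℤ) = (t ^ 2)⁻¹ := by rw [zpow_neg]; norm_cast
  rw [this]; ring

lemma lim0 {a : ℝ} (ha : 0 < a) : Tendsto (fun t : ℝ => exp (-t - a / t)) (𝓝[>] 0) (𝓝 0) := by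
  have hb : Tendsto (fun t : ℝ => t * (a⁻¹ * exp (-t))) (𝓝[>] 0) (𝓝 0) := by
    have : ContinuousAt (fun t : ℝ => t * (a⁻¹ * exp (-t))) 0 := by fun_prop
    have := this.tendsto
    simp only [zero_mul] at this
    exact this.mono_left nhdsWithin_le_nhds
  refine squeeze_zero' (Eventually.of_forall fun t => (exp_pos _).le) ?_ hb
  filter_upwards [self_mem_nhdsWithin] with t ht
  have ht : 0 < t := ht
  calc exp (-t - a / t) = t * (t⁻¹ * exp (-t - a / t)) := by field_simp
    _ ≤ _ := mul_le_mul_of_nonneg_left (bound1 ha ht) ht.le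

lemma limT {a : ℝ} (ha : 0 < a) : Tendsto (fun t : ℝ => t * exp (-t - a / t)) atTop (𝓝 0) := by
  have hb : Tendsto (fun t : ℝ => t * exp (-t)) atTop (𝓝 0) := by
    simpa using Real.tendsto_pow_mul_exp_neg_atTop_nhds_zero 1
  refine squeeze_zero' ?_ ?_ hb
  · filter_upwards [eventually_gt_atTop 0] with t ht
    positivity
  · filter_upwards [eventually_gt_atTop 0] with t ht
    exact mul_le_mul_of_nonneg_left (bound0 ha ht) ht.le

lemma limS {a : ℝ} (ha : 0 < a) : Tendsto (fun t : ℝ => exp (-t - a / t)) atTop (𝓝 0) := by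
  refine squeeze_zero' ?_ ?_ (limT ha)
  · exact Eventually.of_forall fun t => (exp_pos _).le
  · filter_upwards [eventually_ge_atTop 1] with t ht
    have := exp_pos (-t - a / t)
    nlinarith

lemma S_eq {a : ℝ} (ha : 0 < a) : ∫ t in Ioi (0 : ℝ), exp (-t - a / t) = B a := by
  have h := integral_Ioi_deriv_mul_eq_sub (a := (0 : ℝ)) (a' := (0 : ℝ)) (b' := (0 : ℝ))
    (u := fun t : ℝ => exp (-t - a / t))
    (u' := fun t : ℝ => (-1 + a * t ^ (-2 : ℤ)) * exp (-t - a / t))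
    (v := fun _ => (1 : ℝ)) (v' := fun _ => (0 : ℝ))
    (fun t ht => hasD ht) (fun t _ => hasDerivAt_const t 1)
    (by
      refine (((intB ha).const_mul a).sub (intS ha)).congr (Eventually.of_forall fun t => ?_)
      simp only [Pi.sub_apply, Pi.add_apply, Pi.mul_apply]; ring)
    (by
      refine (lim0 ha).congr fun t => ?_
      simp)
    (by
      refine (limS ha).congr fun t => ?_
      simp)
  have h2 : ∫ t in Ioi (0 : ℝ), (a * (t ^ (-2 : ℤ) * exp (-t - a / t)) - exp (-t - a / t)) = 0 := by
    rw [sub_self] at h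
    refine Eq.trans ?_ h
    congr 1; ext t; ring
  rw [integral_sub ((intB ha).const_mul a) (intS ha), integral_const_mul] at h2
  unfold B
  linarith

lemma T_eq {a : ℝ} (ha : 0 < a) : ∫ t in Ioi (0 : ℝ), t * exp (-t - a / t) = B a + a * A a := by
  have e : ∀ t : ℝ, t ∈ Ioi (0 : ℝ) → exp (-t - a / t) + a * (t⁻¹ * exp (-t - a / t))
      - t * exp (-t - a / t) = (-1 + a * t ^ (-2 : ℤ)) * exp (-t - a / t) * t
        + exp (-t - a / t) * 1 := by
    intro t ht
    have ht : 0 < t := ht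
    have : t ^ (-2 : ℤ) * t = t⁻¹ := by
      rw [zpow_neg]; field_simp
    linear_combination (-a * exp (-t - a / t)) * this
  have i : IntegrableOn (fun t : ℝ => exp (-t - a / t) + a * (t⁻¹ * exp (-t - a / t))
      - t * exp (-t - a / t)) (Ioi 0) := ((intS ha).add ((intA ha).const_mul a)).sub (intT ha)
  have h := integral_Ioi_deriv_mul_eq_sub (a := (0 : ℝ)) (a' := (0 : ℝ)) (b' := (0 : ℝ))
    (u := fun t : ℝ => exp (-t - a / t))
    (u' := fun t : ℝ => (-1 + a * t ^ (-2 : ℤ)) * exp (-t - a / t))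
    (v := fun t => t) (v' := fun _ => (1 : ℝ))
    (fun t ht => hasD ht) (fun t _ => hasDerivAt_id t)
    (i.congr_fun e measurableSet_Ioi)
    (by
      have : Tendsto (fun t : ℝ => t) (𝓝[>] 0) (𝓝 0) := tendsto_id.mono_left nhdsWithin_le_nhds
      have := (lim0 ha).mul this
      rw [zero_mul] at this
      exact this)
    (by
      refine (limT ha).congr fun t => ?_
      simp [mul_comm])
  rw [← setIntegral_congr_fun measurableSet_Ioi e,
    integral_sub (f := fun t : ℝ => exp (-t - a / t) + a * (t⁻¹ * exp (-t - a / t)))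
      ((intS ha).add ((intA ha).const_mul a)) (intT ha),
    integral_add (intS ha) ((intA ha).const_mul a), integral_const_mul, S_eq ha] at h
  unfold A
  linarith

lemma inner_ioc {a t : ℝ} (ha : 0 < a) (ht : 0 < t) :
    ∫ z in Ioi (0 : ℝ), max (a - z) 0 * (t⁻¹ * exp (-t - z / t))
      = a * exp (-t) - t * exp (-t) + t * exp (-t - a / t) := by
  rw [setIntegral_eq_of_subset_of_forall_sdiff_eq_zero (s := Ioc 0 a) measurableSet_Ioi
    Ioc_subset_Ioi_self]
  · have e : ∀ z ∈ Ioc 0 a, max (a - z) 0 * (t⁻¹ * exp (-t - z / t))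
        = (a - z) * (t⁻¹ * exp (-t - z / t)) := by
      intro z hz
      rw [max_eq_left (by linarith [hz.2])]
    rw [setIntegral_congr_fun measurableSet_Ioc e, ← intervalIntegral.integral_of_le ha.le]
    have := intervalIntegral.integral_eq_sub_of_hasDerivAt (a := 0) (b := a)
      (f := fun z : ℝ => (t - (a - z)) * exp (-t - z / t))
      (f' := fun z : ℝ => (a - z) * (t⁻¹ * exp (-t - z / t))) (fun z _ => by
        have h1 : HasDerivAt (fun z : ℝ => -t - z / t) (-(1 / t)) z :=
          ((hasDerivAt_id z).div_const t).const_sub (-t)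
        have h2 : HasDerivAt (fun z : ℝ => t - (a - z)) 1 z := by
          simpa using ((hasDerivAt_id z).const_sub a).const_sub t
        have h3 := h2.mul h1.exp
        have h4 : (a - z) * (t⁻¹ * exp (-t - z / t)) = 1 * exp (-t - z / t)
            + (t - (a - z)) * (exp (-t - z / t) * -(1 / t)) := by
          field_simp
          ring
        rw [h4]
        exact h3) (Continuous.intervalIntegrable (by fun_prop) _ _)
    rw [this]
    simp
    ring
  · intro z hz
    have h1 : a < z := by
      by_contra hc
      exact hz.2 ⟨hz.1, not_lt.1 hc⟩
    rw [max_eq_right (by linarith), zero_mul]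

lemma inner_int {a t : ℝ} :
    IntegrableOn (fun z : ℝ => max (a - z) 0 * (t⁻¹ * exp (-t - z / t))) (Ioi 0) := by
  have h : IntegrableOn (fun z : ℝ => max (a - z) 0 * (t⁻¹ * exp (-t - z / t))) (Ioc 0 a) :=
    (Continuous.integrableOn_Icc (by fun_prop)).mono_set Ioc_subset_Icc_self
  refine h.of_forall_sdiff_eq_zero measurableSet_Ioi ?_
  intro z hz
  have h1 : a < z := by
    by_contra hc
    exact hz.2 ⟨hz.1, not_lt.1 hc⟩
  rw [max_eq_right (by linarith), zero_mul]

lemma outer_int {a : ℝ} (ha : 0 < a) : IntegrableOn (fun t : ℝ =>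
    a * exp (-t) - t * exp (-t) + t * exp (-t - a / t)) (Ioi 0) :=
  ((int_1.const_mul a).sub int_t).add (intT ha)

lemma prod_int {a : ℝ} (ha : 0 < a) :
    Integrable (Function.uncurry fun t z : ℝ => max (a - z) 0 * (t⁻¹ * exp (-t - z / t)))
      ((volume.restrict (Ioi 0)).prod (volume.restrict (Ioi 0))) := by
  rw [integrable_prod_iff]
  · refine ⟨Eventually.of_forall fun t => inner_int, ?_⟩
    refine (outer_int ha).congr_fun (fun t ht => ?_) measurableSet_Ioi
    have ht : 0 < t := ht
    simp only [Function.uncurry]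
    rw [← inner_ioc ha ht]
    congr 1; ext z
    rw [Real.norm_of_nonneg (by positivity)]
  · apply Measurable.aestronglyMeasurable
    unfold Function.uncurry
    fun_prop

lemma H_int {a : ℝ} (ha : 0 < a) : IntegrableOn (fun z : ℝ => max (a - z) 0 * A z) (Ioi 0) := by
  have := (prod_int ha).integral_prod_right
  simp only [Function.uncurry, integral_const_mul] at this
  exact this

lemma H_eq {a : ℝ} (ha : 0 < a) :
    ∫ z in Ioi (0 : ℝ), max (a - z) 0 * A z = a - 1 + B a + a * A a := by
  have h := integral_integral_swap (prod_int ha)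
  simp only [integral_const_mul] at h
  unfold A at *
  rw [← h]
  rw [setIntegral_congr_fun measurableSet_Ioi (fun t ht => by
    simpa only [integral_const_mul] using inner_ioc ha ht)]
  rw [integral_add (f := fun t : ℝ => a * exp (-t) - t * exp (-t))
    ((int_1.const_mul a).sub int_t) (intT ha), integral_sub (int_1.const_mul a) int_t,
    integral_const_mul, integral_exp_neg_Ioi_zero, integral_t, T_eq ha]
  unfold A
  ring

theorem stmt_16 (θ ψ φ ϱ ϑ : ℝ) (hψ : 0 < ψ) (hφ : 0 < φ)
    (hϱ : ϱ = θ - (1 / ψ) * Real.sqrt (π / 2))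
    (hϑ : ϑ = θ + (1 / ψ) * Real.sqrt (π / 2))
    (hϱpos : 0 < ϱ) :
    ∫ z in Set.Ioi (0 : ℝ), Omega ψ θ ϱ ϑ (φ * z) * A z
      = 1
        - (1 / 2) * (1 + (2 * ψ / Real.sqrt (2 * π)) * (ϱ + φ - θ)) * B (ϱ / φ)
        - (ψ * ϱ / Real.sqrt (2 * π)) * A (ϱ / φ)
        - (1 / 2) * (1 - (2 * ψ / Real.sqrt (2 * π)) * (ϑ + φ - θ)) * B (ϑ / φ)
        + (ψ * ϑ / Real.sqrt (2 * π)) * A (ϑ / φ) := by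
  have hpi : 0 < Real.sqrt (2 * π) := by positivity
  have hs : Real.sqrt (2 * π) = 2 * Real.sqrt (π / 2) := by
    rw [show 2 * π = 2 ^ 2 * (π / 2) by ring, Real.sqrt_mul (by norm_num),
      Real.sqrt_sq (by norm_num)]
  set s := ψ / Real.sqrt (2 * π) with hsdef
  have hspos : 0 < s := by positivity
  have k1 : s * ((1 / ψ) * Real.sqrt (π / 2)) = 1 / 2 := by
    have : 0 < Real.sqrt (π / 2) := by positivity
    rw [hsdef, hs]; field_simp
  have e1 : s * (ϱ - θ) = - (1 / 2) := by rw [hϱ]; linear_combination -k1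
  have e2 : s * (ϑ - θ) = 1 / 2 := by rw [hϑ]; linear_combination k1
  have hlt : ϱ < ϑ := by nlinarith
  have hϑpos : 0 < ϑ := hϱpos.trans hlt
  have ha : 0 < ϱ / φ := by positivity
  have hb : 0 < ϑ / φ := by positivity
  have key : ∀ c γ : ℝ, φ * max (c / φ - γ) 0 = max (c - φ * γ) 0 := by
    intro c γ
    rw [mul_max_of_nonneg _ _ hφ.le, mul_zero, mul_sub, mul_div_cancel₀ _ hφ.ne']
  have hO : ∀ z : ℝ, Omega ψ θ ϱ ϑ (φ * z) * A z
      = s * φ * (max (ϑ / φ - z) 0 * A z) - s * φ * (max (ϱ / φ - z) 0 * A z) := by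
    intro z
    have : Omega ψ θ ϱ ϑ (φ * z) = s * max (ϑ - φ * z) 0 - s * max (ϱ - φ * z) 0 := by
      unfold Omega
      split_ifs with h1 h2
      · rw [max_eq_left (by linarith), max_eq_left (by linarith)]
        linear_combination e1 - e2
      · rw [max_eq_left (by linarith), max_eq_right (by linarith)]
        linear_combination - e2
      · rw [max_eq_right (by linarith), max_eq_right (by linarith)]
        ring
    rw [this, ← key, ← key]; ring
  simp_rw [hO]
  rw [integral_sub ((H_int hb).const_mul _) ((H_int ha).const_mul _), integral_const_mul,
    integral_const_mul, H_eq ha, H_eq hb]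
  have r1 : 2 * ψ / Real.sqrt (2 * π) = 2 * s := by rw [hsdef]; ring
  have r2 : ∀ c, ψ * c / Real.sqrt (2 * π) = s * c := by intro c; rw [hsdef]; ring
  rw [r1, r2, r2]
  have q1 : φ * (ϱ / φ) = ϱ := by field_simp
  have q2 : φ * (ϑ / φ) = ϑ := by field_simp
  generalize A (ϱ / φ) = A1 at *
  generalize B (ϱ / φ) = B1 at *
  generalize A (ϑ / φ) = A2 at *
  generalize B (ϑ / φ) = B2 at *
  linear_combination (s + s * A2) * q2 - (s + s * A1) * q1 + (1 - B2) * e2 - (1 - B1) * e1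
end

section
/- Let g > 0, u > 0, κ > 0, σ² > 0 be real numbers, let n ≥ 1 be a real number, and let a > 0 (a represents the harvested power budget v η P_D min(g_DS, λ_S)/κ minus the circuit consumption P_c(n+u), which is positive by the energy-sufficiency condition). Define the equivalent SNR under imperfect CSI as a function of the pilot power P ≥ 0 by γ(P) = (g/(κσ²)) · P_S(P) · uP / (uP + P_S(P) + κσ²), where P_S(P) = (a - uP)/n. Then γ is strictly concave on [0, ∞); in particular its second derivative in P is strictly negative wherever it exists on (0, ∞). -/
open Real

lemma aux_d2 (C u m b a : ℝ) (hC : 0 < C) (hu : 0 < u) (hm : 0 ≤ m) (hb : 0 < b) (ha : 0 < a)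
    (P : ℝ) (hP : 0 < P) :
    deriv (deriv (fun P : ℝ => C * ((a - u * P) * (u * P)) / (m * (u * P) + b))) P < 0 := by
  have hD : ∀ x : ℝ, 0 < x → 0 < m * (u * x) + b := fun x hx => by positivity
  have hl : ∀ x : ℝ, HasDerivAt (fun P : ℝ => u * P) u x := fun x => by
    simpa using (hasDerivAt_id x).const_mul u
  have hden : ∀ x : ℝ, HasDerivAt (fun P : ℝ => m * (u * P) + b) (m * u) x := fun x =>
    ((hl x).const_mul m).add_const b
  have h1 : ∀ x : ℝ, 0 < x →
      deriv (fun P : ℝ => C * ((a - u * P) * (u * P)) / (m * (u * P) + b)) x =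
      C * u * (a * b - 2 * b * (u * x) - m * (u * x) ^ 2) / (m * (u * x) + b) ^ 2 := by
    intro x hx
    have h := (((((hl x).const_sub a).mul (hl x)).const_mul C).div (hden x) (hD x hx).ne').deriv
    refine Eq.trans h ?_
    simp only [Pi.mul_apply]
    congr 1
    ring
  have he : deriv (fun P : ℝ => C * ((a - u * P) * (u * P)) / (m * (u * P) + b)) =ᶠ[nhds P]
      fun x => C * u * (a * b - 2 * b * (u * x) - m * (u * x) ^ 2) / (m * (u * x) + b) ^ 2 := by
    filter_upwards [lt_mem_nhds hP] with x hx using h1 x hx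
  rw [he.deriv_eq]
  have hp := hD P hP
  have h2 := (((((((hl P).const_mul (2 * b)).const_sub (a * b)).sub
    (((hl P).pow 2).const_mul m)).const_mul (C * u)).div ((hden P).pow 2)
      (pow_ne_zero 2 hp.ne'))).deriv
  have h3 : deriv (fun x => C * u * (a * b - 2 * b * (u * x) - m * (u * x) ^ 2) /
      (m * (u * x) + b) ^ 2) P = -(2 * C * u ^ 2 * b * (a * m + b)) / (m * (u * P) + b) ^ 3 := by
    refine Eq.trans h2 ?_
    simp only [Pi.sub_apply, Pi.pow_apply]
    rw [div_eq_div_iff (by positivity) (by positivity)]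
    push_cast
    ring
  rw [h3]
  apply div_neg_of_neg_of_pos _ (by positivity)
  have : 0 < 2 * C * u ^ 2 * b * (a * m + b) := by positivity
  linarith

theorem stmt_17 (g u κ σ2 n a : ℝ) (hg : 0 < g) (hu : 0 < u) (hκ : 0 < κ)
    (hσ2 : 0 < σ2) (hn : 1 ≤ n) (ha : 0 < a) :
    StrictConcaveOn ℝ (Set.Ici (0 : ℝ))
      (fun P : ℝ =>
        g / (κ * σ2) * ((a - u * P) / n) * (u * P)
          / (u * P + (a - u * P) / n + κ * σ2)) ∧
    ∀ P : ℝ, 0 < P →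
      DifferentiableAt ℝ
        (deriv (fun P : ℝ =>
          g / (κ * σ2) * ((a - u * P) / n) * (u * P)
            / (u * P + (a - u * P) / n + κ * σ2))) P →
      deriv (deriv (fun P : ℝ =>
          g / (κ * σ2) * ((a - u * P) / n) * (u * P)
            / (u * P + (a - u * P) / n + κ * σ2))) P < 0 := by
  have hn0 : 0 < n := by linarith
  have hf : (fun P : ℝ =>
        g / (κ * σ2) * ((a - u * P) / n) * (u * P)
          / (u * P + (a - u * P) / n + κ * σ2)) =
      fun P : ℝ => g / (κ * σ2) * ((a - u * P) * (u * P)) /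
        ((n - 1) * (u * P) + (a + n * (κ * σ2))) := by
    funext P
    have e1 : u * P + (a - u * P) / n + κ * σ2 =
        ((n - 1) * (u * P) + (a + n * (κ * σ2))) / n := by
      field_simp
      ring
    have e2 : g / (κ * σ2) * ((a - u * P) / n) * (u * P) =
        g / (κ * σ2) * ((a - u * P) * (u * P)) / n := by ring
    rw [e1, e2, div_div_div_cancel_right₀ hn0.ne']
  have hm : 0 ≤ n - 1 := by linarith
  have key := aux_d2 (g / (κ * σ2)) u (n - 1) (a + n * (κ * σ2)) a (by positivity) hu hm
    (by positivity) ha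
  rw [hf]
  refine ⟨?_, fun P hP _ => key P hP⟩
  apply strictConcaveOn_of_deriv2_neg (convex_Ici 0)
  · apply ContinuousOn.div (by fun_prop) (by fun_prop)
    intro x hx
    have hx' : 0 ≤ x := hx
    positivity
  · intro x hx
    rw [interior_Ici] at hx
    exact key x hx
end
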